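/- Let T_a(x) = a₁ + Σ_{k=1}^n (a_{2k}√2 cos kx + a_{2k+1}√2 sin kx), a ~ N(0, I_N), N = 2n+1. Then for any r > 0 and N > max{e⁴, r+1}, E[‖T_a‖_∞^{-r}] ≤ C_r N^{-r/2} (log N)^{-r/2} for a constant C_r depending only on r. -/

import Mathlib

open MeasureTheory ProbabilityTheory Real

/-- The random trigonometric polynomial
`T_a(x) = a₁ + ∑_{k=1}^n (a_{2k} √2 cos kx + a_{2k+1} √2 sin kx)`. -/
noncomputable def trigPoly (n : ℕ) (a : Fin (2 * n + 1) → ℝ) (x : ℝ) : ℝ :=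
  a ⟨0, by omega⟩ + ∑ k : Fin n,
    (a ⟨2 * k.1 + 1, by have := k.2; omega⟩ * Real.sqrt 2 * Real.cos ((k.1 + 1 : ℝ) * x)
      + a ⟨2 * k.1 + 2, by have := k.2; omega⟩ * Real.sqrt 2 * Real.sin ((k.1 + 1 : ℝ) * x))

/-- The sup norm of a function on `[0, 2π]`. -/
noncomputable def supNorm (f : ℝ → ℝ) : ℝ :=
  ⨆ x : Set.Icc (0 : ℝ) (2 * π), |f x.1|

/-!
Up to the factor `√N`, sampling `T_a` at the `N` points `2πj/N` is an orthogonal transformation of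
the coefficients. As the standard Gaussian measure is rotation invariant, `‖T_a‖_∞` therefore
dominates `√N max_j |X_j|` with `X` standard Gaussian on `ℝ^N`.

With `t² = (log N) / 2`, either `max_j |X_j| > t`, or `(max_j |X_j|)^{-r} ≤ ∏_{j ∈ s} |X_j|^{-r/m}`
for a fixed set `s` of `m = ⌊r⌋ + 1` indices while the other `N - m` coordinates satisfy
`|X_j| ≤ t`. The factors `|X_j|^{-r/m}` are integrable because `r / m < 1`, and
`P(|X_j| ≤ t)^{N - m}` is at most a constant times `exp (-c √N)`, hence negligible.
-/

lemma ofReal_sqrt_rpow {x : ℝ} (hx : 0 < x) (s : ℝ) :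
    ENNReal.ofReal √x ^ s = ENNReal.ofReal (x ^ (s / 2)) := by
  rw [ENNReal.ofReal_rpow_of_pos (by positivity), sqrt_eq_rpow, ← rpow_mul hx.le,
    one_div_mul_eq_div]

lemma integrable_and_integral_le_of_lintegral_ofReal_le {α : Type*} {mα : MeasurableSpace α}
    {μ : Measure α} {f : α → ℝ} {B : ℝ} (hf : AEStronglyMeasurable f μ) (hf0 : 0 ≤ᵐ[μ] f)
    (hB : 0 ≤ B) (h : ∫⁻ x, ENNReal.ofReal (f x) ∂μ ≤ ENNReal.ofReal B) :
    Integrable f μ ∧ ∫ x, f x ∂μ ≤ B := by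
  refine ⟨(lintegral_ofReal_ne_top_iff_integrable hf hf0).1 (h.trans_lt ENNReal.ofReal_lt_top).ne,
    ?_⟩
  rw [integral_eq_lintegral_of_nonneg_ae hf0 hf]
  exact ENNReal.toReal_le_of_le_ofReal hB h

lemma lintegral_pi_prod_eq_prod_lintegral {ι : Type*} [Fintype ι] {E : ι → Type*}
    [∀ i, MeasurableSpace (E i)] (μ : ∀ i, Measure (E i)) [∀ i, IsProbabilityMeasure (μ i)]
    {f : ∀ i, E i → ENNReal} (hf : ∀ i, Measurable (f i)) :
    ∫⁻ x, ∏ i, f i (x i) ∂Measure.pi μ = ∏ i, ∫⁻ y, f i y ∂μ i := by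
  have hindep : iIndepFun (fun i x ↦ f i (x i)) (Measure.pi μ) :=
    iIndepFun_pi fun i ↦ (hf i).aemeasurable
  rw [lintegral_prod_eq_prod_lintegral_of_indepFun _ _ hindep
    fun i ↦ (hf i).comp (measurable_pi_apply i)]
  exact Finset.prod_congr rfl fun i _ ↦ (measurePreserving_eval μ i).lintegral_comp (hf i)

section PiNorm

variable {ι : Type*} [Fintype ι] {E : ι → Type*} [∀ i, SeminormedAddCommGroup (E i)]
  {r : ℝ} {s : Finset ι}

lemma enorm_apply_le_enorm_pi (x : ∀ i, E i) (i : ι) : ‖x i‖ₑ ≤ ‖x‖ₑ :=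
  ENNReal.coe_le_coe.2 (nnnorm_le_pi_nnnorm x i)

lemma enorm_rpow_neg_le_prod (hr : 0 ≤ r) (hs : s.Nonempty) (x : ∀ i, E i) :
    ‖x‖ₑ ^ (-r) ≤ ∏ i ∈ s, ‖x i‖ₑ ^ (-(r / s.card)) := by
  have hs' : (s.card : ℝ) ≠ 0 := by exact_mod_cast hs.card_ne_zero
  calc ‖x‖ₑ ^ (-r) = ∏ _i ∈ s, ‖x‖ₑ ^ (-(r / s.card)) := by
        rw [Finset.prod_const, ← ENNReal.rpow_natCast, ← ENNReal.rpow_mul, neg_mul,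
          div_mul_cancel₀ r hs']
    _ ≤ ∏ i ∈ s, ‖x i‖ₑ ^ (-(r / s.card)) := by
        refine Finset.prod_le_prod' fun _ _ ↦ ?_
        rw [ENNReal.rpow_neg, ENNReal.rpow_neg]
        gcongr
        exact enorm_apply_le_enorm_pi x _

lemma enorm_rpow_neg_le_add_prod [DecidableEq ι] (hr : 0 ≤ r) (hs : s.Nonempty) (t : ENNReal)
    (x : ∀ i, E i) :
    ‖x‖ₑ ^ (-r) ≤ t ^ (-r) + ∏ i, s.piecewise (fun _ y ↦ ‖y‖ₑ ^ (-(r / s.card)))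
      (fun i ↦ {y : E i | ‖y‖ₑ ≤ t}.indicator 1) i (x i) := by
  by_cases h : ∃ i, t < ‖x i‖ₑ
  · obtain ⟨i, hi⟩ := h
    refine le_add_right ?_
    rw [ENNReal.rpow_neg, ENNReal.rpow_neg]
    gcongr
    exact hi.le.trans (enorm_apply_le_enorm_pi x i)
  · push Not at h
    refine le_add_left ((enorm_rpow_neg_le_prod hr hs x).trans_eq ?_)
    rw [← Finset.prod_subset s.subset_univ]
    · exact Finset.prod_congr rfl fun i hi ↦ by rw [s.piecewise_eq_of_mem _ _ hi]
    · intro i _ hi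
      rw [s.piecewise_eq_of_notMem _ _ hi]
      exact Set.indicator_of_mem (s := {y : E i | ‖y‖ₑ ≤ t}) (h i) 1

variable [∀ i, MeasurableSpace (E i)] [∀ i, OpensMeasurableSpace (E i)]

lemma lintegral_enorm_rpow_neg_pi_le [DecidableEq ι] (μ : ∀ i, Measure (E i))
    [∀ i, IsProbabilityMeasure (μ i)] (hr : 0 ≤ r) (hs : s.Nonempty) (t : ENNReal) :
    ∫⁻ x, ‖x‖ₑ ^ (-r) ∂Measure.pi μ ≤ t ^ (-r) +
      (∏ i ∈ s, ∫⁻ y, ‖y‖ₑ ^ (-(r / s.card)) ∂μ i) * ∏ i ∈ sᶜ, μ i {y | ‖y‖ₑ ≤ t} := by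
  have hball (i : ι) : MeasurableSet {y : E i | ‖y‖ₑ ≤ t} :=
    measurableSet_le measurable_enorm measurable_const
  let f : ∀ i, E i → ENNReal := s.piecewise (fun _ y ↦ ‖y‖ₑ ^ (-(r / s.card)))
      (fun i ↦ {y : E i | ‖y‖ₑ ≤ t}.indicator 1)
  have hf (i : ι) : Measurable (f i) := by
    by_cases hi : i ∈ s
    · simpa only [f, s.piecewise_eq_of_mem _ _ hi] using measurable_enorm.pow_const _
    · simpa only [f, s.piecewise_eq_of_notMem _ _ hi] using measurable_one.indicator (hball i)
  calc ∫⁻ x, ‖x‖ₑ ^ (-r) ∂Measure.pi μ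
      ≤ ∫⁻ x, (t ^ (-r) + ∏ i, f i (x i)) ∂Measure.pi μ :=
        lintegral_mono (enorm_rpow_neg_le_add_prod hr hs t)
    _ = t ^ (-r) + ∏ i, ∫⁻ y, f i y ∂μ i := by
        rw [lintegral_add_left measurable_const, lintegral_const, measure_univ, mul_one,
          lintegral_pi_prod_eq_prod_lintegral μ hf]
    _ = _ := by
        rw [← Finset.prod_mul_prod_compl s]
        congr 2
        · exact Finset.prod_congr rfl fun i hi ↦ by simp only [f, s.piecewise_eq_of_mem _ _ hi]
        · refine Finset.prod_congr rfl fun i hi ↦ ?_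
          simp only [f, s.piecewise_eq_of_notMem _ _ (Finset.mem_compl.1 hi)]
          exact lintegral_indicator_one (hball i)

end PiNorm

lemma measurePreserving_mulVec_pi_gaussianReal {ι : Type*} [Fintype ι] [DecidableEq ι]
    {U : Matrix ι ι ℝ} (hU : U ∈ Matrix.orthogonalGroup ι ℝ) :
    MeasurePreserving U.mulVec (Measure.pi fun _ ↦ gaussianReal 0 1)
      (Measure.pi fun _ ↦ gaussianReal 0 1) := by
  let e : EuclideanSpace ℝ ι ≃ₗᵢ[ℝ] EuclideanSpace ℝ ι :=
    Unitary.linearIsometryEquiv ⟨Matrix.toEuclideanCLM (𝕜 := ℝ) U,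
      Unitary.map_mem (Matrix.toEuclideanCLM (𝕜 := ℝ)) hU⟩
  have hUe : U.mulVec = WithLp.ofLp ∘ e ∘ WithLp.toLp 2 := rfl
  refine ⟨by fun_prop, ?_⟩
  rw [hUe, ← Measure.map_map (by fun_prop) (by fun_prop),
    ← Measure.map_map (by fun_prop) (by fun_prop), map_pi_eq_stdGaussian, stdGaussian_map,
    ← map_pi_eq_stdGaussian, Measure.map_map (by fun_prop) (by fun_prop)]
  exact Measure.map_id

lemma integrable_abs_rpow_mul_exp_neg_mul_sq {b s : ℝ} (hb : 0 < b) (hs : -1 < s) :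
    Integrable fun x : ℝ ↦ |x| ^ s * exp (-b * x ^ 2) := by
  refine .of_integral_ne_zero ?_
  have heven : ∫ x : ℝ, |x| ^ s * exp (-b * x ^ 2) =
      2 * ∫ x in Set.Ioi (0 : ℝ), x ^ s * exp (-b * x ^ (2 : ℝ)) := by
    simpa only [rpow_two, sq_abs] using
      integral_comp_abs (f := fun x ↦ x ^ s * exp (-b * x ^ (2 : ℝ)))
  rw [heven, integral_rpow_mul_exp_neg_mul_rpow two_pos hs hb]
  have := Gamma_pos_of_pos (s := (s + 1) / 2) (by linarith)
  positivity

lemma integrable_abs_rpow_gaussianReal {v : NNReal} (hv : v ≠ 0) {s : ℝ} (hs : -1 < s) :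
    Integrable (fun x ↦ |x| ^ s) (gaussianReal 0 v) := by
  rw [gaussianReal_of_var_ne_zero 0 hv,
    integrable_withDensity_iff (measurable_gaussianPDF 0 v) (by simp [gaussianPDF])]
  refine ((integrable_abs_rpow_mul_exp_neg_mul_sq (b := (2 * v)⁻¹) (by positivity) hs).const_mul
    (√(2 * π * v))⁻¹).congr (.of_forall fun x ↦ ?_)
  simp only [toReal_gaussianPDF, gaussianPDFReal, sub_zero]
  rw [neg_mul, inv_mul_eq_div (2 * (v : ℝ)), neg_div, mul_left_comm]

lemma lintegral_enorm_rpow_gaussianReal_ne_top {v : NNReal} (hv : v ≠ 0) {s : ℝ} (hs : -1 < s) :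
    ∫⁻ x, ‖x‖ₑ ^ s ∂gaussianReal 0 v ≠ ⊤ := by
  have := nullSingletonClass_gaussianReal (μ := 0) hv
  have hae : (fun x : ℝ ↦ ‖x‖ₑ ^ s) =ᵐ[gaussianReal 0 v] fun x ↦ ENNReal.ofReal (|x| ^ s) := by
    filter_upwards [(gaussianReal 0 v).ae_ne 0] with x hx
    rw [Real.enorm_eq_ofReal_abs, ENNReal.ofReal_rpow_of_pos (abs_pos.2 hx)]
  rw [lintegral_congr_ae hae]
  exact (integrable_abs_rpow_gaussianReal hv hs).lintegral_lt_top.ne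

lemma exists_gaussianReal_Icc_le {v : NNReal} (hv : v ≠ 0) :
    ∃ c : ℝ, 0 < c ∧ ∀ t : ℝ, 0 ≤ t →
      (gaussianReal 0 v).real (Set.Icc (-t) t) ≤ exp (-(c * exp (-t ^ 2 / v))) := by
  refine ⟨(√(2 * π * v))⁻¹ * exp (-1 / v), by positivity, fun t ht ↦ ?_⟩
  set δ : ℝ := (√(2 * π * v))⁻¹ * exp (-1 / v) * exp (-t ^ 2 / v)
  have hpdf {x : ℝ} (hx : x ∈ Set.Ioc t (t + 1)) : δ ≤ gaussianPDFReal 0 v x := by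
    have hsq : x ^ 2 ≤ 2 * (1 + t ^ 2) := by nlinarith [hx.1, hx.2, sq_nonneg (t - 1)]
    simp only [δ, gaussianPDFReal, sub_zero]
    rw [mul_assoc _ (exp _), ← exp_add]
    gcongr ?_ * exp ?_
    calc -1 / (v : ℝ) + -t ^ 2 / v = -(2 * (1 + t ^ 2)) / (2 * v) := by field_simp; ring
      _ ≤ -x ^ 2 / (2 * v) := by gcongr
  have hmass : δ ≤ (gaussianReal 0 v).real (Set.Ioc t (t + 1)) := by
    rw [measureReal_def, gaussianReal_apply_eq_integral 0 hv, ENNReal.toReal_ofReal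
      (integral_nonneg (gaussianPDFReal_nonneg 0 v))]
    calc δ = ∫ _ in Set.Ioc t (t + 1), δ := by simp
      _ ≤ _ := setIntegral_mono_on (integrableOn_const (by simp))
        (integrable_gaussianPDFReal 0 v).integrableOn measurableSet_Ioc fun x ↦ hpdf
  have hsub : Set.Icc (-t) t ⊆ (Set.Ioc t (t + 1))ᶜ := fun x hx hx' ↦ hx.2.not_gt hx'.1
  calc (gaussianReal 0 v).real (Set.Icc (-t) t)
      ≤ (gaussianReal 0 v).real (Set.Ioc t (t + 1))ᶜ := measureReal_mono hsub
    _ = 1 - (gaussianReal 0 v).real (Set.Ioc t (t + 1)) :=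
        probReal_compl_eq_one_sub measurableSet_Ioc
    _ ≤ 1 - δ := by gcongr
    _ ≤ exp (-δ) := one_sub_le_exp_neg δ

lemma exp_neg_mul_sqrt_le_log_rpow {c s x : ℝ} (hc : 0 < c) (hs : 0 ≤ s) (hx : 1 < x) :
    exp (-(c * √x)) ≤ (2 * s / c) ^ s * log x ^ (-s) := by
  have hL : 0 < log x := log_pos hx
  have hlog : log x ≤ 2 * √x := by
    simpa only [sqrt_eq_rpow, div_div_eq_mul_div, div_one, mul_comm]
      using log_le_rpow_div (zero_le_one.trans hx.le) one_half_pos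
  have hpow : log x ^ s ≤ (2 * s / c) ^ s * exp (c * √x) := by
    calc log x ^ s ≤ 2 ^ s * √x ^ s := by
          rw [← mul_rpow zero_le_two (sqrt_nonneg x)]
          gcongr
      _ ≤ 2 ^ s * ((s / c) ^ s * exp (c * √x)) := by
          gcongr
          simpa only [abs_of_pos hc, abs_of_nonneg (sqrt_nonneg x)]
            using rpow_abs_le_mul_exp_abs √x hs hc.ne'
      _ = (2 * s / c) ^ s * exp (c * √x) := by
          rw [← mul_assoc, ← mul_rpow zero_le_two (by positivity), mul_div_assoc]
  rw [exp_neg, rpow_neg hL.le, ← div_eq_mul_inv, le_div_iff₀ (by positivity),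
    inv_mul_le_iff₀ (exp_pos _), mul_comm (exp _)]
  exact hpow

lemma exp_neg_div_sqrt_pow_le {c : ℝ} (hc : 0 ≤ c) {m N : ℕ} (hmN : m ≤ N) :
    exp (-(c / √N)) ^ (N - m) ≤ exp (c * m) * exp (-(c * √N)) := by
  rcases N.eq_zero_or_pos with rfl | hN
  · obtain rfl := Nat.le_zero.1 hmN
    simp
  have hsqrt : 1 ≤ √(N : ℝ) := one_le_sqrt.2 (by exact_mod_cast hN)
  rw [← exp_nat_mul, ← exp_add, Nat.cast_sub hmN]
  gcongr
  calc ((N : ℝ) - m) * -(c / √N) = c * m / √N - c * (N / √N) := by ring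
    _ = c * m / √N - c * √N := by rw [div_sqrt]
    _ ≤ c * m + -(c * √N) := by
        rw [← sub_eq_add_neg]
        gcongr
        exact div_le_self (by positivity) hsqrt

lemma exists_gaussianReal_pow_le (m : ℕ) {s : ℝ} (hs : 0 ≤ s) :
    ∃ D : ℝ, 0 ≤ D ∧ ∀ N : ℕ, 1 < N → m ≤ N →
      gaussianReal 0 1 {y | ‖y‖ₑ ≤ ENNReal.ofReal √(log N / 2)} ^ (N - m) ≤
        ENNReal.ofReal (D * log N ^ (-s)) := by
  obtain ⟨c, hc, htail⟩ := exists_gaussianReal_Icc_le one_ne_zero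
  refine ⟨exp (c * m) * (2 * s / c) ^ s, by positivity, fun N hN hmN ↦ ?_⟩
  have hN' : (1 : ℝ) < N := by exact_mod_cast hN
  have hball : {y : ℝ | ‖y‖ₑ ≤ ENNReal.ofReal √(log N / 2)} =
      Set.Icc (-√(log N / 2)) √(log N / 2) := by
    ext y
    simp only [Set.mem_ofPred_eq, Set.mem_Icc, Real.enorm_eq_ofReal_abs,
      ENNReal.ofReal_le_ofReal_iff (sqrt_nonneg _), abs_le]
  have hexp : exp (-√(log N / 2) ^ 2 / (1 : NNReal)) = 1 / √N := by
    rw [sq_sqrt (by have := log_pos hN'; positivity), NNReal.coe_one, div_one, exp_neg,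
      exp_half, exp_log (by linarith), one_div]
  have hprob : (gaussianReal 0 1).real (Set.Icc (-√(log N / 2)) √(log N / 2)) ≤
      exp (-(c / √N)) := by
    simpa only [hexp, mul_one_div] using htail _ (sqrt_nonneg (log N / 2))
  rw [hball, ← ofReal_measureReal, ← ENNReal.ofReal_pow measureReal_nonneg]
  refine ENNReal.ofReal_le_ofReal ?_
  calc (gaussianReal 0 1).real (Set.Icc (-√(log N / 2)) √(log N / 2)) ^ (N - m)
      ≤ exp (-(c / √N)) ^ (N - m) := by gcongr
    _ ≤ exp (c * m) * exp (-(c * √N)) := exp_neg_div_sqrt_pow_le hc.le hmN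
    _ ≤ exp (c * m) * ((2 * s / c) ^ s * log N ^ (-s)) := by
        gcongr
        exact exp_neg_mul_sqrt_le_log_rpow hc hs hN'
    _ = _ := (mul_assoc _ _ _).symm

theorem exists_lintegral_enorm_rpow_neg_pi_gaussianReal_le {r : ℝ} (hr : 0 ≤ r) :
    ∃ C : ℝ, 0 < C ∧ ∀ (ι : Type*) [Fintype ι], 1 < Fintype.card ι → r < Fintype.card ι →
      ∫⁻ x : ι → ℝ, ‖x‖ₑ ^ (-r) ∂Measure.pi (fun _ ↦ gaussianReal 0 1) ≤
        ENNReal.ofReal (C * log (Fintype.card ι) ^ (-r / 2)) := by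
  classical
  let m : ℕ := ⌊r⌋₊ + 1
  have hrm : r / m < 1 :=
    (div_lt_one (by positivity)).2 (by exact_mod_cast Nat.lt_floor_add_one r)
  obtain ⟨D, hD, hpow⟩ := exists_gaussianReal_pow_le m (div_nonneg hr zero_le_two)
  have hK := lintegral_enorm_rpow_gaussianReal_ne_top one_ne_zero (neg_lt_neg hrm)
  set K := ∫⁻ y, ‖y‖ₑ ^ (-(r / m)) ∂gaussianReal 0 1
  refine ⟨2 ^ (r / 2) + K.toReal ^ m * D, by positivity, fun ι _ hcard hrcard ↦ ?_⟩
  have hmcard : m ≤ Fintype.card ι := (Nat.floor_lt hr).2 hrcard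
  obtain ⟨s, -, hs⟩ := Finset.exists_subset_card_eq (s := (Finset.univ : Finset ι)) hmcard
  have hs_nonempty : s.Nonempty := Finset.card_pos.1 (by omega)
  have hL : 0 < log (Fintype.card ι) := log_pos (by exact_mod_cast hcard)
  have ht : ENNReal.ofReal √(log (Fintype.card ι) / 2) ^ (-r) =
      ENNReal.ofReal (2 ^ (r / 2) * log (Fintype.card ι) ^ (-(r / 2))) := by
    rw [ofReal_sqrt_rpow (half_pos hL), neg_div, rpow_neg (half_pos hL).le, rpow_neg hL.le,
      div_rpow hL.le zero_le_two, inv_div, div_eq_mul_inv]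
  have hmoment := lintegral_enorm_rpow_neg_pi_le (fun _ : ι ↦ gaussianReal 0 1) hr
    hs_nonempty (ENNReal.ofReal √(log (Fintype.card ι) / 2))
  simp only [Finset.prod_const, Finset.card_compl, hs] at hmoment
  calc _ ≤ _ := hmoment
    _ ≤ ENNReal.ofReal (2 ^ (r / 2) * log (Fintype.card ι) ^ (-(r / 2))) +
          K ^ m * ENNReal.ofReal (D * log (Fintype.card ι) ^ (-(r / 2))) := by
        rw [ht]
        gcongr
        exact hpow _ hcard hmcard
    _ = _ := by
        nth_rw 1 [← ENNReal.ofReal_toReal hK]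
        rw [← ENNReal.ofReal_pow (by positivity), ← ENNReal.ofReal_mul (by positivity),
          ← ENNReal.ofReal_add (by positivity) (by positivity), neg_div, ← mul_assoc, ← add_mul]

/-- The Dirichlet kernel `D_n(θ) = 1 + 2 ∑_{k=1}^n cos kθ`, the reproducing kernel of the
trigonometric polynomials of degree at most `n`. -/
noncomputable def dirichletKernel (n : ℕ) (θ : ℝ) : ℝ :=
  1 + ∑ k ∈ Finset.range n, 2 * cos ((k + 1 : ℝ) * θ)

lemma sin_half_mul_dirichletKernel (n : ℕ) (θ : ℝ) :
    sin (θ / 2) * dirichletKernel n θ = sin ((2 * n + 1) * (θ / 2)) := by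
  unfold dirichletKernel
  induction n with
  | zero => simp
  | succ n ih =>
    have hsub : (2 * (n : ℝ) + 1) * (θ / 2) = (n + 1) * θ - θ / 2 := by ring
    have hadd : (2 * ((n + 1 : ℕ) : ℝ) + 1) * (θ / 2) = (n + 1) * θ + θ / 2 := by push_cast; ring
    rw [Finset.sum_range_succ, ← add_assoc, mul_add, ih, hsub, hadd, sin_sub, sin_add]
    ring

lemma sum_fin_two_mul_add_one {M : Type*} [AddCommMonoid M] (n : ℕ) (f : Fin (2 * n + 1) → M) :
    ∑ i, f i = f ⟨0, by omega⟩ +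
      ∑ k : Fin n, (f ⟨2 * k + 1, by omega⟩ + f ⟨2 * k + 2, by omega⟩) := by
  induction n with
  | zero => simp
  | succ n ih =>
    have hlast : ∑ i, f i = ∑ i : Fin (2 * n + 1), f ⟨i, by omega⟩ +
        f ⟨2 * n + 1, by omega⟩ + f ⟨2 * n + 2, by omega⟩ :=
      (Fin.sum_univ_castSucc (n := 2 * n + 2) f).trans
        (congrArg (· + _) (Fin.sum_univ_castSucc (n := 2 * n + 1) _))
    rw [hlast, ih, Fin.sum_univ_castSucc (n := n), add_assoc, add_assoc]
    rfl

/-- The orthonormal trigonometric system `1, √2 cos x, √2 sin x, …, √2 cos nx, √2 sin nx`, indexed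
as the coefficients of `trigPoly`. -/
noncomputable def trigSystem (n : ℕ) (x : ℝ) (i : Fin (2 * n + 1)) : ℝ :=
  if i.1 = 0 then 1
  else if Odd i.1 then √2 * cos (((i.1 + 1) / 2 : ℕ) * x)
  else √2 * sin ((i.1 / 2 : ℕ) * x)

section trigSystem

variable {n : ℕ} (x : ℝ)

lemma trigSystem_zero : trigSystem n x ⟨0, by omega⟩ = 1 := if_pos rfl

lemma trigSystem_odd (k : Fin n) :
    trigSystem n x ⟨2 * k + 1, by omega⟩ = √2 * cos ((k + 1 : ℝ) * x) := by
  have hk : (2 * (k : ℕ) + 1 + 1) / 2 = k + 1 := by omega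
  rw [trigSystem, if_neg (Nat.succ_ne_zero _), if_pos (odd_two_mul_add_one _), hk, Nat.cast_succ]

lemma trigSystem_even (k : Fin n) :
    trigSystem n x ⟨2 * k + 2, by omega⟩ = √2 * sin ((k + 1 : ℝ) * x) := by
  have hk : (2 * (k : ℕ) + 2) / 2 = k + 1 := by omega
  have heven : ¬ Odd (2 * (k : ℕ) + 2) := by grind
  rw [trigSystem, if_neg (Nat.succ_ne_zero _), if_neg heven, hk, Nat.cast_succ]

lemma trigPoly_eq_dotProduct (a : Fin (2 * n + 1) → ℝ) :
    trigPoly n a x = trigSystem n x ⬝ᵥ a := by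
  rw [dotProduct, sum_fin_two_mul_add_one]
  simp only [trigPoly, trigSystem_zero, trigSystem_odd, trigSystem_even, one_mul]
  congr! 2
  ring

lemma trigSystem_dotProduct (y : ℝ) :
    trigSystem n x ⬝ᵥ trigSystem n y = dirichletKernel n (x - y) := by
  rw [dotProduct, sum_fin_two_mul_add_one, dirichletKernel, Finset.sum_range]
  simp only [trigSystem_zero, trigSystem_odd, trigSystem_even, one_mul]
  congr! 2 with k
  rw [mul_sub, cos_sub]
  linear_combination (cos ((k + 1 : ℝ) * x) * cos ((k + 1 : ℝ) * y) +
    sin ((k + 1 : ℝ) * x) * sin ((k + 1 : ℝ) * y)) * mul_self_sqrt (zero_le_two (α := ℝ))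

end trigSystem

/-- The equidistant sampling points `2πj/N` of `[0, 2π)`, where `N = 2n + 1`. -/
noncomputable def trigNode (n : ℕ) (j : Fin (2 * n + 1)) : ℝ := 2 * π * j / (2 * n + 1)

section trigNode

variable {n : ℕ}

lemma trigNode_mem_Icc (j : Fin (2 * n + 1)) : trigNode n j ∈ Set.Icc 0 (2 * π) := by
  have hj : (j : ℝ) ≤ 2 * n + 1 := by exact_mod_cast j.is_lt.le
  refine ⟨by unfold trigNode; positivity, ?_⟩
  rw [trigNode, mul_div_assoc]
  exact mul_le_of_le_one_right two_pi_pos.le (div_le_one_of_le₀ hj (by positivity))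

lemma sin_half_trigNode_sub_ne_zero {j l : Fin (2 * n + 1)} (hjl : j ≠ l) :
    sin ((trigNode n j - trigNode n l) / 2) ≠ 0 := by
  have hN : (0 : ℝ) < 2 * n + 1 := by positivity
  have hj : (j : ℝ) < 2 * n + 1 := by exact_mod_cast j.is_lt
  have hl : (l : ℝ) < 2 * n + 1 := by exact_mod_cast l.is_lt
  have hθ : (trigNode n j - trigNode n l) / 2 = π * (((j : ℝ) - l) / (2 * n + 1)) := by
    unfold trigNode; ring
  rw [hθ, Ne, sin_eq_zero_iff_of_lt_of_lt, mul_eq_zero, div_eq_zero_iff, sub_eq_zero, Nat.cast_inj,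
    Fin.val_inj]
  · simp only [pi_ne_zero, hjl, hN.ne', or_self, not_false_eq_true]
  · rw [neg_eq_neg_one_mul, mul_comm]
    gcongr
    rw [lt_div_iff₀ hN]
    linarith [j.val.cast_nonneg (α := ℝ)]
  · refine mul_lt_of_lt_one_right pi_pos ?_
    rw [div_lt_one hN]
    linarith [l.val.cast_nonneg (α := ℝ)]

lemma dirichletKernel_trigNode_sub (j l : Fin (2 * n + 1)) :
    dirichletKernel n (trigNode n j - trigNode n l) = if j = l then 2 * (n : ℝ) + 1 else 0 := by
  split_ifs with hjl
  · subst hjl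
    simp [dirichletKernel, add_comm, mul_comm]
  · have hzero : sin ((2 * n + 1) * ((trigNode n j - trigNode n l) / 2)) = 0 := by
      have hint : (2 * (n : ℝ) + 1) * ((trigNode n j - trigNode n l) / 2) =
          ((j - l : ℤ) : ℝ) * π := by
        unfold trigNode; push_cast; field_simp
      rw [hint, sin_int_mul_pi]
    rw [← sin_half_mul_dirichletKernel] at hzero
    exact (mul_eq_zero.1 hzero).resolve_left (sin_half_trigNode_sub_ne_zero hjl)

end trigNode

/-- The matrix sending the coefficients of a trigonometric polynomial to its values at the points
`trigNode`, divided by `√N` so as to be orthogonal. -/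
noncomputable def trigMatrix (n : ℕ) : Matrix (Fin (2 * n + 1)) (Fin (2 * n + 1)) ℝ :=
  (√(2 * n + 1))⁻¹ • Matrix.of fun j ↦ trigSystem n (trigNode n j)

section trigMatrix

variable {n : ℕ}

lemma trigMatrix_mem_orthogonalGroup :
    trigMatrix n ∈ Matrix.orthogonalGroup (Fin (2 * n + 1)) ℝ := by
  have hN : (0 : ℝ) < 2 * n + 1 := by positivity
  have hsampling : (Matrix.of fun j ↦ trigSystem n (trigNode n j)) *
      (Matrix.of fun j ↦ trigSystem n (trigNode n j)).transpose = (2 * (n : ℝ) + 1) • 1 := by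
    ext j l
    rw [Matrix.smul_apply, Matrix.one_apply, smul_ite, smul_zero, smul_eq_mul, mul_one,
      ← dirichletKernel_trigNode_sub, ← trigSystem_dotProduct]
    rfl
  rw [Matrix.mem_orthogonalGroup_iff, trigMatrix, Matrix.transpose_smul,
    Matrix.smul_mul, Matrix.mul_smul, hsampling, smul_smul, smul_smul, ← mul_inv,
    mul_self_sqrt hN.le, inv_mul_cancel₀ hN.ne', one_smul]

lemma trigPoly_trigNode (a : Fin (2 * n + 1) → ℝ) (j : Fin (2 * n + 1)) :
    trigPoly n a (trigNode n j) = √(2 * n + 1) * (trigMatrix n).mulVec a j := by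
  have hN : √(2 * (n : ℝ) + 1) ≠ 0 := by positivity
  rw [trigPoly_eq_dotProduct, trigMatrix, Matrix.smul_mulVec, Pi.smul_apply, smul_eq_mul,
    mul_inv_cancel_left₀ hN]
  rfl

end trigMatrix

section supNorm

lemma supNorm_nonneg (f : ℝ → ℝ) : 0 ≤ supNorm f := Real.iSup_nonneg fun _ ↦ abs_nonneg _

lemma bddAbove_range_abs_Icc {f : ℝ → ℝ} (hf : Continuous f) :
    BddAbove (Set.range fun x : Set.Icc (0 : ℝ) (2 * π) ↦ |f x|) :=
  (isCompact_range (by fun_prop)).bddAbove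

lemma abs_le_supNorm {f : ℝ → ℝ} (hf : Continuous f) {x : ℝ} (hx : x ∈ Set.Icc 0 (2 * π)) :
    |f x| ≤ supNorm f :=
  le_ciSup (bddAbove_range_abs_Icc hf) ⟨x, hx⟩

variable {n : ℕ}

lemma continuous_trigPoly (a : Fin (2 * n + 1) → ℝ) : Continuous (trigPoly n a) := by
  unfold trigPoly
  fun_prop

lemma measurable_supNorm_trigPoly : Measurable fun a ↦ supNorm (trigPoly n a) :=
  (lowerSemicontinuous_ciSup (fun a ↦ bddAbove_range_abs_Icc (continuous_trigPoly a)) fun _ ↦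
    Continuous.lowerSemicontinuous (by unfold trigPoly; fun_prop)).measurable

lemma sqrt_mul_norm_trigMatrix_mulVec_le (a : Fin (2 * n + 1) → ℝ) :
    √(2 * n + 1) * ‖(trigMatrix n).mulVec a‖ ≤ supNorm (trigPoly n a) := by
  rw [← le_div_iff₀' (by positivity),
    pi_norm_le_iff_of_nonneg (div_nonneg (supNorm_nonneg _) (sqrt_nonneg _))]
  intro j
  rw [le_div_iff₀' (by positivity), ← abs_of_nonneg (sqrt_nonneg _), norm_eq_abs, ← abs_mul,
    ← trigPoly_trigNode]
  exact abs_le_supNorm (continuous_trigPoly a) (trigNode_mem_Icc j)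

lemma ofReal_supNorm_trigPoly_rpow_neg_le {r : ℝ} (hr : 0 < r) (a : Fin (2 * n + 1) → ℝ) :
    ENNReal.ofReal (supNorm (trigPoly n a) ^ (-r)) ≤
      ENNReal.ofReal ((2 * n + 1) ^ (-r / 2)) * ‖(trigMatrix n).mulVec a‖ₑ ^ (-r) := by
  rcases (supNorm_nonneg (trigPoly n a)).eq_or_lt with hzero | hpos
  · rw [← hzero, zero_rpow (neg_ne_zero.2 hr.ne'), ENNReal.ofReal_zero]
    exact zero_le
  have hle : ENNReal.ofReal √(2 * n + 1) * ‖(trigMatrix n).mulVec a‖ₑ ≤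
      ENNReal.ofReal (supNorm (trigPoly n a)) := by
    rw [← ofReal_norm, ← ENNReal.ofReal_mul (sqrt_nonneg _)]
    exact ENNReal.ofReal_le_ofReal (sqrt_mul_norm_trigMatrix_mulVec_le a)
  calc ENNReal.ofReal (supNorm (trigPoly n a) ^ (-r))
      = ENNReal.ofReal (supNorm (trigPoly n a)) ^ (-r) := (ENNReal.ofReal_rpow_of_pos hpos).symm
    _ ≤ (ENNReal.ofReal √(2 * n + 1) * ‖(trigMatrix n).mulVec a‖ₑ) ^ (-r) := by
        rw [ENNReal.rpow_neg, ENNReal.rpow_neg]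
        gcongr
    _ = _ := by
        rw [ENNReal.mul_rpow_of_ne_top ENNReal.ofReal_ne_top enorm_ne_top,
          ofReal_sqrt_rpow (by positivity)]

end supNorm

theorem expected_inv_sup_norm_trig_general (r : ℝ) (hr : 0 < r) :
    ∃ C : ℝ, 0 < C ∧ ∀ n : ℕ, 0 < n → r < (2 * n + 1 : ℝ) →
      Integrable (fun a : Fin (2 * n + 1) → ℝ ↦ supNorm (trigPoly n a) ^ (-r))
        (Measure.pi fun _ ↦ gaussianReal 0 1) ∧
      (∫ a : Fin (2 * n + 1) → ℝ, supNorm (trigPoly n a) ^ (-r)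
          ∂(Measure.pi fun _ ↦ gaussianReal 0 1)) ≤
        C * (2 * n + 1 : ℝ) ^ (-r / 2) * log (2 * n + 1 : ℝ) ^ (-r / 2) := by
  obtain ⟨C, hC, hgaussian⟩ := exists_lintegral_enorm_rpow_neg_pi_gaussianReal_le hr.le
  refine ⟨C, hC, fun n hn hrn ↦ integrable_and_integral_le_of_lintegral_ofReal_le
    (measurable_supNorm_trigPoly.pow_const _).aestronglyMeasurable
    (.of_forall fun a ↦ rpow_nonneg (supNorm_nonneg _) _) ?_ ?_⟩
  · have : 0 ≤ log (2 * n + 1 : ℝ) := log_nonneg (by linarith [n.cast_nonneg (α := ℝ)])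
    positivity
  have hmax := hgaussian (Fin (2 * n + 1)) (by simpa using hn) (by simpa using hrn)
  rw [Fintype.card_fin, Nat.cast_succ, Nat.cast_mul, Nat.cast_two] at hmax
  calc ∫⁻ a, ENNReal.ofReal (supNorm (trigPoly n a) ^ (-r))
          ∂(Measure.pi fun _ ↦ gaussianReal 0 1)
      ≤ ∫⁻ a, ENNReal.ofReal ((2 * n + 1) ^ (-r / 2)) * ‖(trigMatrix n).mulVec a‖ₑ ^ (-r)
          ∂Measure.pi fun _ ↦ gaussianReal 0 1 :=
        lintegral_mono (ofReal_supNorm_trigPoly_rpow_neg_le hr)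
    _ = ENNReal.ofReal ((2 * n + 1) ^ (-r / 2)) *
          ∫⁻ x : Fin (2 * n + 1) → ℝ, ‖x‖ₑ ^ (-r) ∂Measure.pi fun _ ↦ gaussianReal 0 1 := by
        rw [lintegral_const_mul' _ _ ENNReal.ofReal_ne_top,
          (measurePreserving_mulVec_pi_gaussianReal trigMatrix_mem_orthogonalGroup).lintegral_comp
            (measurable_enorm.pow_const (-r))]
    _ ≤ ENNReal.ofReal ((2 * n + 1) ^ (-r / 2)) *
          ENNReal.ofReal (C * log (2 * n + 1) ^ (-r / 2)) := by gcongr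
    _ = _ := by
        rw [← ENNReal.ofReal_mul (by positivity), mul_left_comm, mul_assoc]

/-- `E[‖T_a‖_∞^{-r}] ≤ C_r N^{-r/2} (log N)^{-r/2}` for `N = 2n+1 > max{e⁴, r+1}`. -/
theorem expected_inv_sup_norm_trig (r : ℝ) (hr : 0 < r) :
    ∃ C : ℝ, 0 < C ∧ ∀ n : ℕ,
      Real.exp 4 < (2 * n + 1 : ℝ) → r + 1 < (2 * n + 1 : ℝ) →
      (∫ a : Fin (2 * n + 1) → ℝ, (supNorm (trigPoly n a)) ^ (-r)
          ∂(Measure.pi fun _ => gaussianReal 0 1)) ≤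
        C * (2 * n + 1 : ℝ) ^ (-r / 2) * Real.log (2 * n + 1 : ℝ) ^ (-r / 2) := by
  obtain ⟨C, hC, hbound⟩ := expected_inv_sup_norm_trig_general r hr
  refine ⟨C, hC, fun n hn hrn ↦ (hbound n (Nat.pos_of_ne_zero ?_) (by linarith)).2⟩
  rintro rfl
  norm_num at hn
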